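/- For any histogram h, the mechanisms LapRNC^{d̄,τ}(h, D_{d̄}(h)) — the limited histogram report noisy counts mechanism run on the domain D_{d̄}(h) of the top d̄ indices of h — and the unknown-domain Laplace mechanism LapUnk^{Δ,d̄,τ}(h) produce outcomes that are equal in distribution. -/

import Mathlib

open MeasureTheory
open scoped ENNReal

/-- Measurable space structure on `Option α`, via the identification `Option α ≃ α ⊕ Unit`. -/
instance Option.instMeasurableSpace' {α : Type*} [MeasurableSpace α] :
    MeasurableSpace (Option α) :=
  MeasurableSpace.comap (fun o : Option α => (o.elim (Sum.inr PUnit.unit) Sum.inl : α ⊕ PUnit.{1}))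
    inferInstance

/-- Measurable space structure on `List α`, via the identification of a list with its
length together with its entries. -/
instance List.instMeasurableSpace' {α : Type*} [MeasurableSpace α] :
    MeasurableSpace (List α) :=
  MeasurableSpace.comap (fun l : List α => (⟨l.length, l.get⟩ : Σ n : ℕ, Fin n → α))
    inferInstance

/-- Density of the Laplace distribution `Lap(b)`. -/
noncomputable def lapPdf (b z : ℝ) : ℝ := Real.exp (-|z| / b) / (2 * b)

/-- The Laplace distribution `Lap(b)` as a measure on `ℝ`. -/
noncomputable def lapMeasure (b : ℝ) : Measure ℝ :=
  volume.withDensity fun z => ENNReal.ofReal (lapPdf b z)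

/-- A permutation sorting the histogram counts in decreasing order. -/
noncomputable def sortPerm {d : ℕ} (h : Fin d → ℕ) : Equiv.Perm (Fin d) :=
  Tuple.sort fun i => OrderDual.toDual (h i)

/-- `sortedCount h p` is the `(p+1)`-st largest count of `h` (0-indexed), as a real. -/
noncomputable def sortedCount {d : ℕ} (h : Fin d → ℕ) (p : ℕ) : ℝ :=
  if hp : p < d then (h (sortPerm h ⟨p, hp⟩) : ℝ) else 0

/-- The set `D_{d̄}(h)` of indices of the top `d̄` counts of `h`. -/
noncomputable def topD {d : ℕ} (dbar : ℕ) (h : Fin d → ℕ) : Finset (Fin d) :=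
  Finset.image (fun a => sortPerm h a) (Finset.univ.filter fun a : Fin d => a.val < dbar)

/-- The output map of the limited histogram report noisy counts mechanism
`LapRNC^{d̄,τ}(h, D)`: each `i ∈ D` receives noisy count `v_i = h_i + Lap(2τΔ/ε)` and the
threshold is `v_⊥ = h_{(d̄+1)} + τ(1 + 2Δ·log(Δ/δ̂)/ε) + Lap(2τΔ/ε)`; the output is the
decreasingly-sorted list of (index, noisy count) pairs appearing strictly before `v_⊥`,
followed by `(⊥, v_⊥)` (`⊥` encoded as `none`). -/
noncomputable def lapRNCMap {d : ℕ} (dbar Δ : ℕ) (τ ε δhat : ℝ) (h : Fin d → ℕ)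
    (D : Finset (Fin d)) (X : (Fin d → ℝ) × ℝ) : List (Option (Fin d) × ℝ) :=
  let vbot : ℝ := sortedCount h dbar + τ * (1 + 2 * (Δ : ℝ) * Real.log ((Δ : ℝ) / δhat) / ε)
      + X.2
  let w : Fin (d + 1) → ℝ := fun p =>
    if hp : p.val < d then
      (if (⟨p.val, hp⟩ : Fin d) ∈ D then (h ⟨p.val, hp⟩ : ℝ) + X.1 ⟨p.val, hp⟩ else vbot - 1)
    else vbot
  let π := Tuple.sort fun p => OrderDual.toDual (w p)
  (((List.ofFn fun a : Fin (d + 1) => π a).takeWhile fun p => p.val != d).filterMap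
      fun p => if hp : p.val < d then
        (if (⟨p.val, hp⟩ : Fin d) ∈ D then some (some ⟨p.val, hp⟩, w p) else none)
      else none)
    ++ [(none, vbot)]

/-- The limited histogram report noisy counts mechanism `LapRNC^{d̄,τ}(h, D)` as a measure. -/
noncomputable def lapRNC {d : ℕ} (dbar Δ : ℕ) (τ ε δhat : ℝ) (h : Fin d → ℕ)
    (D : Finset (Fin d)) : Measure (List (Option (Fin d) × ℝ)) :=
  Measure.map (lapRNCMap dbar Δ τ ε δhat h D)
    ((Measure.pi fun _ : Fin d => lapMeasure (2 * τ * (Δ : ℝ) / ε)).prod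
      (lapMeasure (2 * τ * (Δ : ℝ) / ε)))

/-- The output map of the unknown-domain Laplace mechanism `LapUnk^{Δ,d̄,τ}`. -/
noncomputable def lapUnkMap {d : ℕ} (dbar Δ : ℕ) (τ ε δhat : ℝ) (h : Fin d → ℕ)
    (X : Fin (dbar + 1) → ℝ) : List (Option (Fin d) × ℝ) :=
  let vbot : ℝ := sortedCount h dbar + τ * (1 + 2 * (Δ : ℝ) * Real.log ((Δ : ℝ) / δhat) / ε)
      + X ⟨dbar, Nat.lt_succ_self dbar⟩
  let w : Fin (dbar + 1) → ℝ := fun p =>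
    if p.val < dbar then sortedCount h p.val + X p else vbot
  let π := Tuple.sort fun p => OrderDual.toDual (w p)
  (((List.ofFn fun a : Fin (dbar + 1) => π a).takeWhile fun p => p.val != dbar).filterMap
      fun p => if hp : p.val < d then some (some (sortPerm h ⟨p.val, hp⟩), w p) else none)
    ++ [(none, vbot)]

/-- The unknown-domain Laplace mechanism `LapUnk^{Δ,d̄,τ}` as a measure. -/
noncomputable def lapUnk {d : ℕ} (dbar Δ : ℕ) (τ ε δhat : ℝ) (h : Fin d → ℕ) :
    Measure (List (Option (Fin d) × ℝ)) :=
  Measure.map (lapUnkMap dbar Δ τ ε δhat h)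
    (Measure.pi fun _ : Fin (dbar + 1) => lapMeasure (2 * τ * (Δ : ℝ) / ε))

/-!
Both mechanisms release the noisy counts that reach the noisy threshold, by decreasing count,
followed by the threshold. An index outside `D_{d̄}(h)` never reaches it, so `LapRNC` depends
only on the noise of the top `d̄` indices and of the threshold. Relabelling that noise by rank
turns the output of `LapRNC` into the output of `LapUnk`, as long as no two noisy counts
coincide: the two mechanisms break ties differently, one by index and the other by rank.
Independent atomless noise has no ties almost surely, and the relabelled noise of `LapRNC` has
the law of the noise of `LapUnk`.
-/

open ProbabilityTheory

theorem integral_lapPdf {b : ℝ} (hb : 0 < b) : ∫ z, lapPdf b z = 1 := by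
  have hIoi : ∫ x in Set.Ioi (0 : ℝ), Real.exp (-x / b) = b := by
    have h := integral_exp_mul_Ioi (a := -b⁻¹) (by simpa using hb) 0
    simp only [mul_zero, Real.exp_zero, neg_div_neg_eq, one_div, inv_inv] at h
    simpa only [neg_mul, inv_mul_eq_div, ← neg_div] using h
  simp only [lapPdf]
  rw [integral_div, integral_comp_abs (f := fun x => Real.exp (-x / b)), hIoi,
    div_self (by positivity)]

theorem isProbabilityMeasure_lapMeasure {b : ℝ} (hb : 0 < b) :
    IsProbabilityMeasure (lapMeasure b) := by
  have hnonneg (z : ℝ) : 0 ≤ lapPdf b z := by rw [lapPdf]; positivity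
  refine ⟨?_⟩
  rw [lapMeasure, withDensity_apply _ .univ, setLIntegral_univ,
    ← ofReal_integral_eq_lintegral_ofReal
    (integrable_of_integral_eq_one (integral_lapPdf hb)) (.of_forall hnonneg),
    integral_lapPdf hb, ENNReal.ofReal_one]

theorem lapMeasure_of_nonpos {b : ℝ} (hb : b ≤ 0) : lapMeasure b = 0 := by
  have hpdf (z : ℝ) : ENNReal.ofReal (lapPdf b z) = 0 :=
    ENNReal.ofReal_of_nonpos (div_nonpos_of_nonneg_of_nonpos (Real.exp_pos _).le (by linarith))
  simp [lapMeasure, hpdf]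

-- The scale `2τΔ/ε` of the noise vanishes for `Δ = 0`; both mechanisms are then the zero measure.
instance isZeroOrProbabilityMeasure_lapMeasure (b : ℝ) :
    IsZeroOrProbabilityMeasure (lapMeasure b) := by
  rcases le_or_gt b 0 with hb | hb
  · rw [lapMeasure_of_nonpos hb]
    infer_instance
  · have := isProbabilityMeasure_lapMeasure hb
    infer_instance

instance nullSingletonClass_lapMeasure (b : ℝ) : NullSingletonClass (lapMeasure b) := by
  rw [lapMeasure]
  infer_instance

section DistinctValues

variable {Ω α β : Type*} [MeasurableSpace Ω] [MeasurableSpace α] [MeasurableSpace β]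

theorem nullSingletonClass_map {μ : Measure α} [NullSingletonClass μ]
    [MeasurableSingletonClass β] {f : α → β} (hf : Measurable f) (hinj : Function.Injective f) :
    NullSingletonClass (μ.map f) where
  measure_singleton y := by
    rw [Measure.map_apply hf (measurableSet_singleton y)]
    exact (Set.subsingleton_singleton.preimage hinj).measure_zero μ

variable [MeasurableEq α] {P : Measure Ω} [IsFiniteMeasure P]

theorem ae_ne_of_indepFun {X Y : Ω → α} (hX : AEMeasurable X P) (hY : AEMeasurable Y P)
    [NullSingletonClass (P.map Y)] (hXY : X ⟂ᵢ[P] Y) : ∀ᵐ ω ∂P, X ω ≠ Y ω := by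
  have hmeas : MeasurableSet {z : α × α | z.1 ≠ z.2} := measurableSet_diagonal.compl
  have hprod : ∀ᵐ z ∂(P.map fun ω => (X ω, Y ω)), z.1 ≠ z.2 := by
    rw [(indepFun_iff_map_prod_eq_prod_map_map hX hY).1 hXY, Measure.ae_prod_iff_ae_ae hmeas]
    exact .of_forall fun x => (Measure.ae_ne _ x).mono fun y hy => hy.symm
  exact ae_of_ae_map (hX.prodMk hY) hprod

theorem ae_injective_of_iIndepFun {ι : Type*} [Countable ι] {X : ι → Ω → α}
    (hX : ∀ i, AEMeasurable (X i) P) [∀ i, NullSingletonClass (P.map (X i))]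
    (hindep : iIndepFun X P) : ∀ᵐ ω ∂P, Function.Injective fun i => X i ω := by
  have hne : ∀ᵐ ω ∂P, ∀ i j, i ≠ j → X i ω ≠ X j ω := by
    simp only [ae_all_iff]
    exact fun i j hij => ae_ne_of_indepFun (hX i) (hX j) (hindep.indepFun hij)
  filter_upwards [hne] with ω hω i j hij
  exact by_contra fun h => hω i j h hij

end DistinctValues

theorem ae_injective_pi {ι β : Type*} [Fintype ι] {α : ι → Type*} [∀ i, MeasurableSpace (α i)]
    [MeasurableSpace β] [MeasurableEq β] (μ : ∀ i, Measure (α i)) [∀ i, IsProbabilityMeasure (μ i)]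
    [∀ i, NullSingletonClass (μ i)] {f : ∀ i, α i → β} (hf : ∀ i, Measurable (f i))
    (hinj : ∀ i, Function.Injective (f i)) :
    ∀ᵐ X ∂(Measure.pi μ), Function.Injective fun i => f i (X i) := by
  have hatomless (i : ι) : NullSingletonClass ((Measure.pi μ).map fun X => f i (X i)) := by
    have hlaw : (Measure.pi μ).map (fun X => f i (X i)) = (μ i).map (f i) := by
      rw [← (measurePreserving_eval μ i).map_eq, Measure.map_map (hf i) (measurable_pi_apply i)]
      rfl
    rw [hlaw]
    exact nullSingletonClass_map (hf i) (hinj i)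
  exact ae_injective_of_iIndepFun
    (fun i => ((hf i).comp (measurable_pi_apply i)).aemeasurable)
    (iIndepFun_pi fun i => (hf i).aemeasurable)

section Sorting

variable {n m : ℕ} {α : Type*} [LinearOrder α]

/-- The strict total order in which `Tuple.sort` lists the indices of `v` by decreasing value:
equal values are listed by increasing index. -/
def SortsBefore (v : Fin n → α) (i j : Fin n) : Prop :=
  v j < v i ∨ v i = v j ∧ i < j

instance asymm_sortsBefore (v : Fin n → α) : Std.Asymm (SortsBefore v) where
  asymm i j := by
    rintro (hij | ⟨heq, hij⟩) (hji | ⟨heq', hji⟩)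
    · exact hij.asymm hji
    · exact hij.ne heq'
    · exact hji.ne heq
    · exact hij.asymm hji

theorem pairwise_ofFn_sort (v : Fin n → α) :
    (List.ofFn fun a => Tuple.sort (fun i => OrderDual.toDual (v i)) a).Pairwise
      (SortsBefore v) := by
  set σ := Tuple.sort fun i => OrderDual.toDual (v i) with hσ
  obtain ⟨hmono, hties⟩ := Tuple.eq_sort_iff.1 hσ
  refine List.pairwise_ofFn.2 fun a b hab => ?_
  have hle : v (σ b) ≤ v (σ a) := hmono hab.le
  rcases hle.lt_or_eq with hlt | heq
  · exact .inl hlt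
  · exact .inr ⟨heq.symm, hties a b hab heq.symm⟩

theorem mem_ofFn_perm (σ : Equiv.Perm (Fin n)) (i : Fin n) : i ∈ List.ofFn fun a => σ a :=
  List.mem_ofFn.2 (σ.surjective i)

theorem mem_takeWhile_ne_iff {β : Type*} [DecidableEq β] {r : β → β → Prop} [Std.Asymm r]
    {l : List β} {x b : β} (hl : l.Pairwise r) (hb : b ∈ l) :
    x ∈ l.takeWhile (· != b) ↔ x ∈ l ∧ r x b := by
  induction l with
  | nil => simp at hb
  | cons a t ih =>
    obtain ⟨hat, ht⟩ := List.pairwise_cons.1 hl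
    by_cases hab : a = b
    · subst hab
      have hnot : ∀ x ∈ a :: t, ¬ r x a := List.forall_mem_cons.2
        ⟨fun h => Std.Asymm.asymm _ _ h h, fun y hy => Std.Asymm.asymm _ _ (hat y hy)⟩
      simpa using hnot x
    · have hbt : b ∈ t := (List.mem_cons.1 hb).resolve_left (Ne.symm hab)
      rw [List.takeWhile_cons_of_pos (by simpa using hab), List.mem_cons, List.mem_cons, ih ht hbt,
        or_and_right]
      exact or_congr_left (iff_self_and.2 fun h => h ▸ hat b hbt)

/-- The indices that a mechanism with noisy counts `v` and noisy threshold `t` releases, in order.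
A count equal to `t` is released, since `⊥` has the last index and `Tuple.sort` is stable. -/
noncomputable def aboveThreshold (v : Fin n → α) (t : α) : List (Fin n) :=
  (List.ofFn fun a => Tuple.sort (fun i => OrderDual.toDual (v i)) a).filter fun i => t ≤ v i

theorem pairwise_aboveThreshold (v : Fin n → α) (t : α) :
    (aboveThreshold v t).Pairwise (SortsBefore v) :=
  (pairwise_ofFn_sort v).filter _

theorem mem_aboveThreshold {v : Fin n → α} {t : α} {i : Fin n} :
    i ∈ aboveThreshold v t ↔ t ≤ v i := by
  simp only [aboveThreshold, List.mem_filter, mem_ofFn_perm, true_and, decide_eq_true_eq]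

theorem aboveThreshold_eq_iff {v : Fin n → α} {t : α} {l : List (Fin n)} :
    aboveThreshold v t = l ↔ l.Pairwise (SortsBefore v) ∧ ∀ i, i ∈ l ↔ t ≤ v i := by
  constructor
  · rintro rfl
    exact ⟨pairwise_aboveThreshold v t, fun i => mem_aboveThreshold⟩
  · rintro ⟨hl, hmem⟩
    exact (pairwise_aboveThreshold v t).eq_of_mem_iff hl fun i =>
      mem_aboveThreshold.trans (hmem i).symm

theorem takeWhile_sort_snoc (v : Fin n → α) (t : α) :
    (List.ofFn fun a => Tuple.sort
        (fun i => OrderDual.toDual ((Fin.snoc v t : Fin (n + 1) → α) i)) a).takeWhile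
      (fun i => i.val != n) = (aboveThreshold v t).map Fin.castSucc := by
  have hsort := pairwise_ofFn_sort (Fin.snoc v t : Fin (n + 1) → α)
  have hpred : (fun i : Fin (n + 1) => i.val != n) = (· != Fin.last n) := by
    funext i
    simp [bne, Fin.ext_iff, Bool.beq_eq_decide_eq]
  rw [hpred]
  refine (hsort.sublist (List.takeWhile_sublist _)).eq_of_mem_iff ?_ fun i => ?_
  · refine List.pairwise_map.2 ((pairwise_aboveThreshold v t).imp fun h => ?_)
    simpa [SortsBefore] using h
  · rw [mem_takeWhile_ne_iff hsort (mem_ofFn_perm _ _)]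
    simp only [mem_ofFn_perm, true_and, List.mem_map, mem_aboveThreshold]
    cases i using Fin.lastCases with
    | last => simp [SortsBefore]
    | cast i => simp [SortsBefore, Fin.castSucc_lt_last, le_iff_lt_or_eq, eq_comm]

theorem aboveThreshold_eq_map_comp {v : Fin n → α} {t : α} {e : Fin m → Fin n}
    (hinj : Function.Injective (v ∘ e)) (hrange : ∀ i, t ≤ v i → i ∈ Set.range e) :
    aboveThreshold v t = (aboveThreshold (v ∘ e) t).map e := by
  refine aboveThreshold_eq_iff.2 ⟨?_, fun i => ?_⟩
  · refine List.pairwise_map.2 ((pairwise_aboveThreshold (v ∘ e) t).imp ?_)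
    rintro p q (hlt | ⟨heq, hpq⟩)
    · exact .inl hlt
    · exact absurd (hinj heq) hpq.ne
  · simp only [List.mem_map, mem_aboveThreshold, Function.comp_apply]
    constructor
    · rintro ⟨p, hp, rfl⟩
      exact hp
    · intro hi
      obtain ⟨p, rfl⟩ := hrange i hi
      exact ⟨p, hi, rfl⟩

end Sorting

/-- The common output format of the two mechanisms, for noisy counts `v`, noisy threshold `t` and
names `label` of the indices: the released pairs by decreasing count, followed by `(⊥, t)`. -/
noncomputable def noisyReport {n : ℕ} {ι : Type*} (v : Fin n → ℝ) (t : ℝ) (label : Fin n → ι) :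
    List (Option ι × ℝ) :=
  ((aboveThreshold v t).map fun i => (some (label i), v i)) ++ [(none, t)]

theorem noisyReport_eq_comp {n m : ℕ} {ι : Type*} {v : Fin n → ℝ} {t : ℝ} {e : Fin m → Fin n}
    (hinj : Function.Injective (v ∘ e)) (hrange : ∀ i, t ≤ v i → i ∈ Set.range e)
    (label : Fin n → ι) : noisyReport v t label = noisyReport (v ∘ e) t (label ∘ e) := by
  rw [noisyReport, noisyReport, aboveThreshold_eq_map_comp hinj hrange, List.map_map]
  rfl

section Measurability

variable {Ω : Type*} [MeasurableSpace Ω]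

theorem measurable_apply_of_countable {κ γ : Type*} [Countable κ] [MeasurableSpace γ]
    {s : Ω → κ} (hs : ∀ k, MeasurableSet {ω | s ω = k}) {G : κ → Ω → γ}
    (hG : ∀ k, Measurable (G k)) : Measurable fun ω => G (s ω) ω := by
  let _ : MeasurableSpace κ := ⊤
  have hs' : Measurable s := measurable_to_countable' hs
  exact (measurable_from_prod_countable_right (f := fun z : κ × Ω => G z.1 z.2) hG).comp
    (hs'.prodMk measurable_id)

theorem measurable_list_map {α β : Type*} [MeasurableSpace α] {f : Ω → β → α}
    (hf : ∀ x, Measurable fun ω => f ω x) (l : List β) : Measurable fun ω => l.map (f ω) := by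
  have hmk (k : ℕ) : Measurable (Sigma.mk (β := fun n => Fin n → α) k) :=
    fun _ hs => MeasurableSpace.measurableSet_iInf.1 hs k
  have heq : ((fun l : List α => (⟨l.length, l.get⟩ : Σ n : ℕ, Fin n → α)) ∘
      fun ω => l.map (f ω)) = Sigma.mk l.length ∘ fun ω i => f ω (l.get i) := by
    funext ω
    refine Sigma.ext (by simp) (Function.hfunext (by simp) fun i j hij => ?_)
    have hval : i.val = j.val := (Fin.heq_ext_iff (by simp)).1 hij
    simp [hval]
  rw [measurable_comap_iff, heq]
  exact (hmk l.length).comp (measurable_pi_iff.2 fun i => hf _)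

theorem measurableSet_sortsBefore {n : ℕ} {v : Ω → Fin n → ℝ} (hv : Measurable v)
    (i j : Fin n) : MeasurableSet {ω | SortsBefore (v ω) i j} := by
  have hvi (i : Fin n) : Measurable fun ω => v ω i := measurable_pi_iff.1 hv i
  exact (measurableSet_lt (hvi j) (hvi i)).union
    ((measurableSet_eq_fun (hvi i) (hvi j)).inter (.const _))

theorem measurableSet_aboveThreshold_eq {n : ℕ} {v : Ω → Fin n → ℝ} {t : Ω → ℝ}
    (hv : Measurable v) (ht : Measurable t) (l : List (Fin n)) :
    MeasurableSet {ω | aboveThreshold (v ω) (t ω) = l} := by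
  simp only [aboveThreshold_eq_iff, List.pairwise_iff_get]
  simp only [Set.ofPred_and, Set.ofPred_forall]
  refine .inter (.iInter fun a => .iInter fun b => .iInter fun _ =>
    measurableSet_sortsBefore hv _ _) (.iInter fun i => ?_)
  exact (MeasurableSet.const _).iff (measurableSet_le ht (measurable_pi_iff.1 hv i))

theorem measurable_noisyReport {n : ℕ} {ι : Type*} [MeasurableSpace ι] {v : Ω → Fin n → ℝ}
    {t : Ω → ℝ} (hv : Measurable v) (ht : Measurable t) (label : Fin n → ι) :
    Measurable fun ω => noisyReport (v ω) (t ω) label := by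
  let entry (ω : Ω) (o : Option (Fin n)) : Option ι × ℝ := (o.map label, o.elim (t ω) (v ω))
  have hentry (o : Option (Fin n)) : Measurable fun ω => entry ω o := by
    cases o with
    | none => exact measurable_const.prodMk ht
    | some i => exact measurable_const.prodMk (measurable_pi_iff.1 hv i)
  have heq : (fun ω => noisyReport (v ω) (t ω) label) = fun ω =>
      ((aboveThreshold (v ω) (t ω)).map some ++ [none]).map (entry ω) := by
    funext ω
    simp [noisyReport, entry]
  rw [heq]
  exact measurable_apply_of_countable (measurableSet_aboveThreshold_eq hv ht)
    (G := fun l ω => (l.map some ++ [none]).map (entry ω)) fun l => measurable_list_map hentry _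

end Measurability

/-- The value `h_{(d̄+1)} + τ(1 + 2Δ·log(Δ/δ̂)/ε)` of the threshold before noise is added. -/
noncomputable def thresholdMean {d : ℕ} (dbar Δ : ℕ) (τ ε δhat : ℝ) (h : Fin d → ℕ) : ℝ :=
  sortedCount h dbar + τ * (1 + 2 * (Δ : ℝ) * Real.log ((Δ : ℝ) / δhat) / ε)

/-- The index of the `(p+1)`-st largest count of `h`, for `p < d̄`. -/
noncomputable def topIndex {d dbar : ℕ} (hd : dbar ≤ d) (h : Fin d → ℕ) (p : Fin dbar) : Fin d :=
  sortPerm h (p.castLE hd)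

section Mechanisms

variable {d dbar : ℕ}

theorem topIndex_injective (hd : dbar ≤ d) (h : Fin d → ℕ) :
    Function.Injective (topIndex hd h) :=
  (sortPerm h).injective.comp (Fin.castLE_injective hd)

theorem sortedCount_eq_topIndex (hd : dbar ≤ d) (h : Fin d → ℕ) (p : Fin dbar) :
    sortedCount h p = h (topIndex hd h p) :=
  dif_pos (p.isLt.trans_le hd)

theorem mem_topD_iff_mem_range (hd : dbar ≤ d) {h : Fin d → ℕ} {i : Fin d} :
    i ∈ topD dbar h ↔ i ∈ Set.range (topIndex hd h) := by
  simp only [topD, Finset.mem_image, Finset.mem_filter, Finset.mem_univ, true_and, Set.mem_range]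
  constructor
  · rintro ⟨a, ha, rfl⟩
    exact ⟨⟨a, ha⟩, rfl⟩
  · rintro ⟨p, rfl⟩
    exact ⟨p.castLE hd, p.isLt, rfl⟩

variable (Δ : ℕ) (τ ε δhat : ℝ)

theorem lapRNCMap_eq_noisyReport (h : Fin d → ℕ) (D : Finset (Fin d)) (X : (Fin d → ℝ) × ℝ) :
    lapRNCMap dbar Δ τ ε δhat h D X =
      noisyReport
        (fun i => if i ∈ D then h i + X.1 i else thresholdMean dbar Δ τ ε δhat h + X.2 - 1)
        (thresholdMean dbar Δ τ ε δhat h + X.2) id := by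
  set t := thresholdMean dbar Δ τ ε δhat h + X.2 with ht
  set v : Fin d → ℝ := fun i => if i ∈ D then h i + X.1 i else t - 1 with hv
  have hcounts (p : Fin (d + 1)) : (if hp : p.val < d then
      (if (⟨p.val, hp⟩ : Fin d) ∈ D then (h ⟨p.val, hp⟩ : ℝ) + X.1 ⟨p.val, hp⟩ else t - 1)
      else t) = (Fin.snoc v t : Fin (d + 1) → ℝ) p := by
    cases p using Fin.lastCases <;> simp [hv]
  have hmem (i : Fin d) (hi : i ∈ aboveThreshold v t) : i ∈ D := by
    by_contra hD
    have hle := mem_aboveThreshold.1 hi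
    simp only [hv, if_neg hD] at hle
    linarith
  rw [thresholdMean] at ht
  simp only [lapRNCMap, ← ht, hcounts, takeWhile_sort_snoc, List.filterMap_map, noisyReport]
  rw [← List.filterMap_eq_map]
  congr 1
  refine List.filterMap_congr fun i hi => ?_
  simp [hmem i hi]

theorem lapUnkMap_eq_noisyReport (hd : dbar ≤ d) (h : Fin d → ℕ) (X : Fin (dbar + 1) → ℝ) :
    lapUnkMap dbar Δ τ ε δhat h X =
      noisyReport (fun p => h (topIndex hd h p) + X p.castSucc)
        (thresholdMean dbar Δ τ ε δhat h + X (Fin.last dbar)) (topIndex hd h) := by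
  set t := thresholdMean dbar Δ τ ε δhat h + X (Fin.last dbar) with ht
  set v : Fin dbar → ℝ := fun p => h (topIndex hd h p) + X p.castSucc with hv
  have hcounts (p : Fin (dbar + 1)) : (if p.val < dbar then sortedCount h p.val + X p else t) =
      (Fin.snoc v t : Fin (dbar + 1) → ℝ) p := by
    cases p using Fin.lastCases <;> simp [hv, sortedCount_eq_topIndex hd]
  have hlast : (⟨dbar, Nat.lt_succ_self dbar⟩ : Fin (dbar + 1)) = Fin.last dbar := rfl
  rw [thresholdMean] at ht
  simp only [lapUnkMap, hlast, ← ht, hcounts, takeWhile_sort_snoc, List.filterMap_map, noisyReport]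
  rw [← List.filterMap_eq_map]
  congr 1
  refine List.filterMap_congr fun p _ => ?_
  simp [p.isLt.trans_le hd, topIndex, Fin.castLE]

theorem measurable_lapUnkMap (hd : dbar ≤ d) (h : Fin d → ℕ) :
    Measurable (lapUnkMap dbar Δ τ ε δhat h) := by
  simp only [funext (lapUnkMap_eq_noisyReport Δ τ ε δhat hd h)]
  exact measurable_noisyReport (by fun_prop) (by fun_prop) _

/-- The noise that `LapUnk` draws, as a function of the noise that `LapRNC` draws: the noise of
the top indices by decreasing count, followed by the noise of the threshold. -/
noncomputable def topNoise (hd : dbar ≤ d) (h : Fin d → ℕ) (X : (Fin d → ℝ) × ℝ) :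
    Fin (dbar + 1) → ℝ :=
  Fin.snoc (X.1 ∘ topIndex hd h) X.2

theorem lapRNCMap_topD_eq_lapUnkMap_topNoise (hd : dbar ≤ d) {h : Fin d → ℕ}
    {X : (Fin d → ℝ) × ℝ} (hinj : Function.Injective fun i => (h i : ℝ) + X.1 i) :
    lapRNCMap dbar Δ τ ε δhat h (topD dbar h) X =
      lapUnkMap dbar Δ τ ε δhat h (topNoise hd h X) := by
  rw [lapRNCMap_eq_noisyReport, lapUnkMap_eq_noisyReport Δ τ ε δhat hd]
  set t := thresholdMean dbar Δ τ ε δhat h + X.2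
  set v : Fin d → ℝ := fun i => if i ∈ topD dbar h then h i + X.1 i else t - 1 with hv
  have hcomp : v ∘ topIndex hd h = fun p => (h (topIndex hd h p) : ℝ) + X.1 (topIndex hd h p) := by
    funext p
    exact if_pos ((mem_topD_iff_mem_range hd).2 ⟨p, rfl⟩)
  have hinj_comp : Function.Injective (v ∘ topIndex hd h) := by
    rw [hcomp]
    exact hinj.comp (topIndex_injective hd h)
  have hrange (i : Fin d) (hi : t ≤ v i) : i ∈ Set.range (topIndex hd h) := by
    by_contra hnot
    simp only [hv, mem_topD_iff_mem_range hd, if_neg hnot] at hi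
    linarith
  rw [noisyReport_eq_comp hinj_comp hrange, hcomp]
  simp [topNoise, t]

end Mechanisms

theorem measurePreserving_pi_precomp {ι κ : Type*} [Fintype ι] [Fintype κ] {α : ι → Type*}
    [∀ i, MeasurableSpace (α i)] (μ : ∀ i, Measure (α i)) [∀ i, IsProbabilityMeasure (μ i)]
    {e : κ → ι} (he : Function.Injective e) :
    MeasurePreserving (fun X k => X (e k)) (Measure.pi μ) (Measure.pi fun k => μ (e k)) := by
  have hmeas (k : κ) : Measurable fun X : ∀ i, α i => X (e k) := measurable_pi_apply (e k)
  have hindep : iIndepFun (fun k X => X (e k)) (Measure.pi μ) :=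
    (iIndepFun_pi (X := fun i (x : α i) => x) fun _ => aemeasurable_id).precomp he
  have hlaw (k : κ) : (Measure.pi μ).map (fun X => X (e k)) = μ (e k) :=
    (measurePreserving_eval μ (e k)).map_eq
  refine ⟨measurable_pi_iff.2 hmeas, ?_⟩
  rw [(iIndepFun_iff_map_fun_eq_pi_map fun k => (hmeas k).aemeasurable).1 hindep]
  simp only [hlaw]

theorem measurePreserving_snoc (n : ℕ) {α : Type*} [MeasurableSpace α] (μ : Measure α)
    [SigmaFinite μ] :
    MeasurePreserving (fun X : (Fin n → α) × α => (Fin.snoc X.1 X.2 : Fin (n + 1) → α))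
      ((Measure.pi fun _ => μ).prod μ) (Measure.pi fun _ => μ) := by
  convert (measurePreserving_piFinSuccAbove (fun _ : Fin (n + 1) => μ) (Fin.last n)).symm.comp
    Measure.measurePreserving_swap using 1
  funext X
  exact (Fin.insertNth_last' X.2 X.1).symm

theorem measurePreserving_topNoise {d dbar : ℕ} (hd : dbar ≤ d) (h : Fin d → ℕ) (μ : Measure ℝ)
    [IsProbabilityMeasure μ] :
    MeasurePreserving (topNoise hd h) ((Measure.pi fun _ => μ).prod μ) (Measure.pi fun _ => μ) :=
  (measurePreserving_snoc dbar μ).comp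
    ((measurePreserving_pi_precomp (fun _ => μ) (topIndex_injective hd h)).prod (.id μ))

theorem lapRNC_topD_eq_lapUnk_general {d : ℕ} (dbar Δ : ℕ) (τ ε δhat : ℝ) (hd : dbar ≤ d)
    (h : Fin d → ℕ) (μ : Measure ℝ) [IsZeroOrProbabilityMeasure μ] [NullSingletonClass μ] :
    Measure.map (lapRNCMap dbar Δ τ ε δhat h (topD dbar h)) ((Measure.pi fun _ => μ).prod μ) =
      Measure.map (lapUnkMap dbar Δ τ ε δhat h) (Measure.pi fun _ => μ) := by
  rcases eq_zero_or_isProbabilityMeasure μ with rfl | hμ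
  · have hpi : (Measure.pi fun _ : Fin (dbar + 1) => (0 : Measure ℝ)) = 0 := by
      simp [← Measure.measure_univ_eq_zero, Measure.pi_univ]
    simp [hpi]
  have hnoise := measurePreserving_topNoise hd h μ
  have hdistinct : ∀ᵐ X ∂((Measure.pi fun _ => μ).prod μ),
      Function.Injective fun i => (h i : ℝ) + X.1 i :=
    Measure.quasiMeasurePreserving_fst.ae (ae_injective_pi (fun _ => μ)
      (fun i => measurable_const_add (h i : ℝ)) fun i => add_right_injective (h i : ℝ))
  rw [← hnoise.map_eq, Measure.map_map (measurable_lapUnkMap Δ τ ε δhat hd h) hnoise.measurable]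
  refine Measure.map_congr (hdistinct.mono fun X hX => ?_)
  exact lapRNCMap_topD_eq_lapUnkMap_topNoise Δ τ ε δhat hd hX

/-- For any histogram `h`, the limited histogram report noisy counts mechanism
run on the domain `D_{d̄}(h)` of the top `d̄` indices of `h` and the unknown-domain Laplace
mechanism `LapUnk^{Δ,d̄,τ}(h)` produce outcomes that are equal in distribution. -/
theorem lapRNC_topD_eq_lapUnk {d : ℕ} (dbar Δ : ℕ) (τ ε δ δhat : ℝ)
    (hd : dbar < d) (hΔ : Δ < dbar + 1)
    (hτ : 0 < τ) (hε : 0 < ε) (hδ : 0 < δ) (hδhat : 0 < δhat)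
    (hsolve : δ = δhat / 4 * (Real.exp (ε / 2) + 1) * (3 + Real.log ((Δ : ℝ) / δhat)))
    (h : Fin d → ℕ) :
    lapRNC dbar Δ τ ε δhat h (topD dbar h) = lapUnk dbar Δ τ ε δhat h :=
  lapRNC_topD_eq_lapUnk_general dbar Δ τ ε δhat hd.le h (lapMeasure (2 * τ * (Δ : ℝ) / ε))
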